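/- (Second outer bound.) Let (M, (W_j), (S_i^j)) be an exact-repair regenerating code with parameters (n,k,d) and secondary parameters (B,α,β), where n ≥ d+1, and let 0 ≤ q ≤ k. Let Δ = {(i,j) : q+1 ≤ j ≤ k and j < i ≤ d+1} be the helper index region of the minimal configuration with intact nodes {1,…,q} and repaired nodes {q+1,…,k}. Let (M_1,L_1), …, (M_s,L_s) be pairs of subsets with L_t ⊆ {q+1,…,k} and M_t ⊆ {1,…,d+1}, such that the rectangles M_t × L_t are pairwise disjoint, contained in Δ, and their union equals Δ. For each t put ℓ_t = |L_t| ≥ 1 and m_t = |M_t| ≥ 1, and let r_t be an integer with ℓ_t ≤ r_t and r_t + m_t ≤ k. Then (1 + Σ_{t=1}^s ℓ_t)·B ≤ B_q + Σ_{t=1}^s ( B_{r_t+m_t−1} + (ℓ_t − 1)(B_{r_t+m_t−2} − β) ). -/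

import Mathlib

open Finset

/-- Shannon entropy (base 2) of a finitely-valued random variable `X` on a finite
probability space with mass function `P`. -/
noncomputable def entH {Ω S : Type*} [Fintype Ω] (P : Ω → ℝ) (X : Ω → S) : ℝ :=
  letI := Classical.decEq S
  ∑ s ∈ Finset.univ.image X,
    -((∑ ω ∈ Finset.univ.filter (fun ω => X ω = s), P ω) *
       Real.logb 2 (∑ ω ∈ Finset.univ.filter (fun ω => X ω = s), P ω))

/-- Conditional entropy `H(X | Y) = H(X, Y) - H(Y)`. -/
noncomputable def condH {Ω S T : Type*} [Fintype Ω] (P : Ω → ℝ) (X : Ω → S) (Y : Ω → T) : ℝ :=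
  entH P (fun ω => (X ω, Y ω)) - entH P Y

/-- The joint random variable `W_J = (W_j : j ∈ J)`. -/
def jointW {Ω : Type*} {n : ℕ} {σW : Fin n → Type*} (W : ∀ j, Ω → σW j)
    (J : Finset (Fin n)) : Ω → ∀ j : J, σW j.1 :=
  fun ω j => W j.1 ω

/-- The joint random variable `(S_i^j : (i,j) ∈ E)` for a set `E` of pairs. -/
def jointS {Ω : Type*} {n : ℕ} {σS : Fin n → Fin n → Type*} (S : ∀ i j, Ω → σS i j)
    (E : Finset (Fin n × Fin n)) : Ω → ∀ e : E, σS e.1.1 e.1.2 :=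
  fun ω e => S e.1.1 e.1.2 ω

/-- The joint random variable `S_I^j = (S_i^j : i ∈ I)`. -/
def jointSto {Ω : Type*} {n : ℕ} {σS : Fin n → Fin n → Type*} (S : ∀ i j, Ω → σS i j)
    (I : Finset (Fin n)) (j : Fin n) : Ω → ∀ i : I, σS i.1 j :=
  fun ω i => S i.1 j ω

/-- An exact-repair regenerating code with parameters `(n,k,d)` (with `1 ≤ k ≤ d ≤ n-1`)
and secondary parameters `(B,α,β)`: the file `M`, the stored data `W j` on server `j`
(servers indexed by `Fin n`, server `j` of the paper being index `j-1`), and the helper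
information `S i j` sent from server `i` to repair server `j`. -/
structure IsRegenCode {Ω : Type*} [Fintype Ω] (n k d : ℕ) (B α β : ℝ) (P : Ω → ℝ)
    {σM : Type*} {σW : Fin n → Type*} {σS : Fin n → Fin n → Type*}
    (M : Ω → σM) (W : ∀ j, Ω → σW j) (S : ∀ i j, Ω → σS i j) : Prop where
  prob_nonneg : ∀ ω, 0 ≤ P ω
  prob_sum : ∑ ω, P ω = 1
  hk : 1 ≤ k
  hkd : k ≤ d
  hdn : d + 1 ≤ n
  hB : 0 ≤ B
  hα : 0 ≤ α
  hβ : 0 ≤ β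
  hMB : entH P M = B
  hWα : ∀ j, entH P (W j) = α
  hWM : ∀ j, condH P (W j) M = 0
  hMW : ∀ J : Finset (Fin n), k ≤ J.card → condH P M (jointW W J) = 0
  hSβ : ∀ i j, i ≠ j → entH P (S i j) = β
  hSW : ∀ i j, i ≠ j → condH P (S i j) (W i) = 0
  hWS : ∀ (j : Fin n) (I : Finset (Fin n)), d ≤ I.card → j ∉ I →
    condH P (W j) (jointSto S I j) = 0

/-- `B_q = qα + ((k-q)(k-q-1)/2)β + (d+1-k)(k-q)β`. -/
noncomputable def Bfun (k d q : ℕ) (α β : ℝ) : ℝ :=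
  (q : ℝ) * α + (((k - q) * (k - q - 1) : ℕ) : ℝ) / 2 * β
    + (((d + 1 - k) * (k - q) : ℕ) : ℝ) * β

/-!
Call a random variable finer than another if it determines it almost surely. On the points of
positive mass, random variables up to mutual determination are partitions, joint variables are
infima of partitions, and the entropy is antitone and submodular; nothing else about probability
is needed.

Node `j` can be rebuilt from `p` intact nodes and `d - p` further helpers, at an additional cost of
`(d - p)β`. Rebuilding nodes one at a time from `p` intact ones shows `B ≤ H(W_J) + B_p - pα` for
`|J| = p`. For a node `i` outside `R ⊇ L`, submodularity applied to the messages `S_i^j`, `j ∈ L`,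
over `W_R`, and then to `W_R, S_i^L` and `W_i` over `S_i^L`, turns this lower bound into an *upper*
bound on `H(S_i^L)`. Bounding one row of each rectangle in this way and every other message of the
rectangle by `β` gives the theorem, because `W_1, …, W_q` and the messages indexed by `Δ` determine
the file.
-/

open Classical in
/-- The mass of the block of the partition `r` that contains `ω`. -/
noncomputable def blockMass {Ω : Type*} [Fintype Ω] (P : Ω → ℝ) (r : Setoid Ω) (ω : Ω) : ℝ :=
  ∑ ω' with r ω ω', P ω'

/-- The Shannon entropy (base 2) of the partition `r`, as the expectation of the information
content of the block of a random point. -/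
noncomputable def partitionEntropy {Ω : Type*} [Fintype Ω] (P : Ω → ℝ) (r : Setoid Ω) : ℝ :=
  ∑ ω, P ω * -Real.logb 2 (blockMass P r ω)

/-- An abstract entropy. The elements of `L` are pieces of information: `a ≤ b` means that `a`
determines `b`, and `a ⊓ b` is the joint information of `a` and `b`. -/
structure IsEntropy {L : Type*} [SemilatticeInf L] [OrderTop L] (H : L → ℝ) : Prop where
  antitone : Antitone H
  map_top : H ⊤ = 0
  submodular : ∀ ⦃a b c⦄, a ≤ c → b ≤ c → H (a ⊓ b) + H c ≤ H a + H b

section Partition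

variable {Ω : Type*} [Fintype Ω] {P : Ω → ℝ} {a b c r t : Setoid Ω}

theorem blockMass_mono (hP : ∀ ω, 0 ≤ P ω) (h : r ≤ t) (ω : Ω) :
    blockMass P r ω ≤ blockMass P t ω := by
  classical
  exact sum_le_sum_of_subset_of_nonneg (monotone_filter_right _ fun _ _ => @h ω _)
    fun ω' _ _ => hP ω'

theorem blockMass_pos (hP : ∀ ω, 0 < P ω) (r : Setoid Ω) (ω : Ω) : 0 < blockMass P r ω :=
  sum_pos (fun ω' _ => hP ω') ⟨ω, by simp⟩

theorem blockMass_congr {x y : Ω} (h : r x y) : blockMass P r x = blockMass P r y := by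
  classical
  exact sum_congr (filter_congr fun z _ => ⟨r.trans' (r.symm' h), r.trans' h⟩) fun _ _ => rfl

theorem partitionEntropy_strictAnti (hP : ∀ ω, 0 < P ω) : StrictAnti (partitionEntropy P) := by
  classical
  intro r t hrt
  have hmono := blockMass_mono (fun ω => (hP ω).le) hrt.le
  obtain ⟨x, y, hxy, hnxy⟩ : ∃ x y, t x y ∧ ¬ r x y := by
    simpa [Setoid.le_def] using hrt.not_ge
  have hlt : blockMass P r x < blockMass P t x :=
    sum_lt_sum_of_subset (monotone_filter_right _ fun _ _ => Setoid.le_def.1 hrt.le) (i := y)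
      (by simpa using hxy) (by simpa using hnxy) (hP y) fun z _ _ => (hP z).le
  refine sum_lt_sum (fun ω _ => ?_) ⟨x, mem_univ x, ?_⟩
  · exact mul_le_mul_of_nonneg_left (neg_le_neg (Real.logb_le_logb_of_le one_lt_two
      (blockMass_pos hP r ω) (hmono ω))) (hP ω).le
  · exact mul_lt_mul_of_pos_left (neg_lt_neg (Real.logb_lt_logb one_lt_two
      (blockMass_pos hP r x) hlt)) (hP x)

theorem partitionEntropy_top (hP1 : ∑ ω, P ω = 1) : partitionEntropy P ⊤ = 0 := by
  simp [partitionEntropy, blockMass, Setoid.top_def, hP1]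

open Classical in
theorem sum_div_blockMass_inf_le_one (a b : Setoid Ω) (u v : Ω) :
    ∑ ω with a u ω ∧ b ω v, P ω / blockMass P (a ⊓ b) ω ≤ 1 := by
  by_cases hex : ∃ w, a u w ∧ b w v
  · obtain ⟨w, hau, hbv⟩ := hex
    have hblock : ∀ ω, (a u ω ∧ b ω v) ↔ (a ⊓ b) w ω := fun ω =>
      ⟨fun h => ⟨a.trans' (a.symm' hau) h.1, b.trans' hbv (b.symm' h.2)⟩,
        fun h => ⟨a.trans' hau h.1, b.trans' (b.symm' h.2) hbv⟩⟩
    calc ∑ ω with a u ω ∧ b ω v, P ω / blockMass P (a ⊓ b) ω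
        = ∑ ω with (a ⊓ b) w ω, P ω / blockMass P (a ⊓ b) w := by
          refine sum_congr (filter_congr fun ω _ => hblock ω) fun ω hω => ?_
          rw [blockMass_congr (mem_filter.1 hω).2]
      _ = blockMass P (a ⊓ b) w / blockMass P (a ⊓ b) w := (sum_div ..).symm
      _ ≤ 1 := div_self_le_one _
  · rw [filter_false_of_mem fun ω _ h => hex ⟨ω, h⟩, sum_empty]
    exact zero_le_one

open Classical in
theorem sum_mul_blockMass_div_le (hP : ∀ ω, 0 ≤ P ω) (ha : a ≤ c) (hb : b ≤ c) (u : Ω) :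
    ∑ ω with a u ω, P ω * blockMass P b ω / blockMass P (a ⊓ b) ω ≤ blockMass P c u := by
  calc ∑ ω with a u ω, P ω * blockMass P b ω / blockMass P (a ⊓ b) ω
      = ∑ ω with a u ω, ∑ v with b ω v, P v * (P ω / blockMass P (a ⊓ b) ω) := by
        refine sum_congr rfl fun ω _ => ?_
        rw [← sum_mul, mul_div_right_comm, mul_comm, blockMass]
    _ = ∑ v with c u v, ∑ ω with a u ω ∧ b ω v, P v * (P ω / blockMass P (a ⊓ b) ω) := by
        refine sum_comm' fun ω v => ?_
        simp only [mem_filter, mem_univ, true_and]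
        exact ⟨fun h => ⟨h, c.trans' (ha h.1) (hb h.2)⟩, And.left⟩
    _ ≤ ∑ v with c u v, P v := by
        refine sum_le_sum fun v _ => ?_
        rw [← mul_sum]
        exact mul_le_of_le_one_right (hP v) (sum_div_blockMass_inf_le_one a b u v)

theorem sum_mul_blockMass_mul_div_le (hP : ∀ ω, 0 < P ω) (ha : a ≤ c) (hb : b ≤ c) :
    ∑ ω, P ω * (blockMass P a ω * blockMass P b ω / (blockMass P (a ⊓ b) ω * blockMass P c ω))
      ≤ ∑ ω, P ω := by
  classical
  calc ∑ ω, P ω * (blockMass P a ω * blockMass P b ω /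
        (blockMass P (a ⊓ b) ω * blockMass P c ω))
      = ∑ ω, ∑ u with a ω u,
          P u / blockMass P c u * (P ω * blockMass P b ω / blockMass P (a ⊓ b) ω) := by
        refine sum_congr rfl fun ω _ => ?_
        rw [sum_congr rfl fun u hu => by
          rw [← blockMass_congr (P := P) (ha (mem_filter.1 hu).2)], ← sum_mul, ← sum_div]
        change _ = blockMass P a ω / _ * _
        ring
    _ = ∑ u, ∑ ω with a u ω,
          P u / blockMass P c u * (P ω * blockMass P b ω / blockMass P (a ⊓ b) ω) :=
        sum_comm' fun ω u => by simp [a.comm']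
    _ ≤ ∑ u, P u := by
        refine sum_le_sum fun u _ => ?_
        rw [← mul_sum]
        have hc := blockMass_pos hP c u
        exact (mul_le_mul_of_nonneg_left (sum_mul_blockMass_div_le (fun ω => (hP ω).le) ha hb u)
          (div_nonneg (hP u).le hc.le)).trans_eq (div_mul_cancel₀ _ hc.ne')

theorem partitionEntropy_submodular (hP : ∀ ω, 0 < P ω) (ha : a ≤ c) (hb : b ≤ c) :
    partitionEntropy P (a ⊓ b) + partitionEntropy P c
      ≤ partitionEntropy P a + partitionEntropy P b := by
  let ratio (ω : Ω) : ℝ :=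
    blockMass P a ω * blockMass P b ω / (blockMass P (a ⊓ b) ω * blockMass P c ω)
  have hpos (r : Setoid Ω) (ω : Ω) := blockMass_pos hP r ω
  have hne (r : Setoid Ω) (ω : Ω) := (hpos r ω).ne'
  have hratio (ω : Ω) : 0 < ratio ω :=
    div_pos (mul_pos (hpos a ω) (hpos b ω)) (mul_pos (hpos _ ω) (hpos c ω))
  have hlog : ∑ ω, P ω * Real.log (ratio ω) ≤ 0 :=
    calc ∑ ω, P ω * Real.log (ratio ω)
        ≤ ∑ ω, P ω * (ratio ω - 1) := sum_le_sum fun ω _ =>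
          mul_le_mul_of_nonneg_left (Real.log_le_sub_one_of_pos (hratio ω)) (hP ω).le
      _ = ∑ ω, P ω * ratio ω - ∑ ω, P ω := by simp only [mul_sub, mul_one, sum_sub_distrib]
      _ ≤ 0 := sub_nonpos.2 (sum_mul_blockMass_mul_div_le hP ha hb)
  have hlogb : ∑ ω, P ω * Real.logb 2 (ratio ω) ≤ 0 := by
    simp only [Real.logb, ← mul_div_assoc, ← sum_div]
    exact div_nonpos_of_nonpos_of_nonneg hlog (Real.log_nonneg one_le_two)
  have hexpand (ω : Ω) : Real.logb 2 (ratio ω)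
      = Real.logb 2 (blockMass P a ω) + Real.logb 2 (blockMass P b ω)
        - (Real.logb 2 (blockMass P (a ⊓ b) ω) + Real.logb 2 (blockMass P c ω)) := by
    rw [Real.logb_div (mul_ne_zero (hne a ω) (hne b ω)) (mul_ne_zero (hne _ ω) (hne c ω)),
      Real.logb_mul (hne a ω) (hne b ω), Real.logb_mul (hne _ ω) (hne c ω)]
  simp only [hexpand, mul_sub, mul_add, sum_sub_distrib, sum_add_distrib] at hlogb
  simp only [partitionEntropy, mul_neg, sum_neg_distrib]
  linarith

theorem isEntropy_partitionEntropy (hP : ∀ ω, 0 < P ω) (hP1 : ∑ ω, P ω = 1) :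
    IsEntropy (partitionEntropy P) where
  antitone := (partitionEntropy_strictAnti hP).antitone
  map_top := partitionEntropy_top hP1
  submodular _ _ _ := partitionEntropy_submodular hP

end Partition

section SupportKer

variable {Ω : Type*} {P : Ω → ℝ}

/-- The partition into level sets of `X` of the points of positive mass. Discarding the null points
makes almost sure determination of random variables the order relation of partitions. -/
def supportKer {S : Type*} (P : Ω → ℝ) (X : Ω → S) : Setoid {ω // 0 < P ω} :=
  Setoid.ker fun ω => X ω

theorem inf_supportKer_le {ι : Type*} {σ : ι → Type*} (J : Finset ι) (X : ∀ i, Ω → σ i) :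
    J.inf (fun i => supportKer P (X i)) ≤ supportKer P fun ω (i : J) => X i ω :=
  fun _ _ h => funext fun i => (inf_le i.2 : J.inf (fun i => supportKer P (X i)) ≤ _) h

theorem supportKer_prodMk {S T : Type*} (X : Ω → S) (Y : Ω → T) :
    supportKer P (fun ω => (X ω, Y ω)) = supportKer P X ⊓ supportKer P Y :=
  Setoid.ext fun _ _ => Prod.mk_inj

variable [Fintype Ω]

theorem sum_support (hP : ∀ ω, 0 ≤ P ω) {f : Ω → ℝ} (hf : ∀ ω, P ω = 0 → f ω = 0) :
    ∑ ω : {ω // 0 < P ω}, f ω = ∑ ω, f ω := by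
  rw [← sum_subtype (univ.filter fun ω => 0 < P ω) (by simp) f]
  exact sum_filter_of_ne fun ω _ hω => (hP ω).lt_of_ne' (mt (hf ω) hω)

open Classical in
theorem entH_eq_sum {S : Type*} (P : Ω → ℝ) (X : Ω → S) :
    entH P X = ∑ ω, P ω * -Real.logb 2 (∑ ω' with X ω = X ω', P ω') := by
  rw [entH, ← sum_fiberwise_of_maps_to (g := X) fun ω _ => mem_image_of_mem X (mem_univ ω)]
  refine sum_congr rfl fun s _ => ?_
  rw [← mul_neg, sum_mul]
  refine sum_congr rfl fun ω hω => ?_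
  obtain rfl := (mem_filter.1 hω).2
  simp only [eq_comm]

theorem blockMass_supportKer {S : Type*} [DecidableEq S] (hP : ∀ ω, 0 ≤ P ω) (X : Ω → S)
    (ω : {ω // 0 < P ω}) :
    blockMass (fun ω : {ω // 0 < P ω} => P ω) (supportKer P X) ω
      = ∑ ω' with X ω = X ω', P ω' := by
  classical
  rw [blockMass, sum_filter, sum_filter, ← sum_support hP fun ω' h => by simp [h]]
  exact sum_congr rfl fun _ _ => if_congr Setoid.ker_def rfl rfl

theorem entH_eq_partitionEntropy {S : Type*} (hP : ∀ ω, 0 ≤ P ω) (X : Ω → S) :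
    entH P X = partitionEntropy (fun ω : {ω // 0 < P ω} => P ω) (supportKer P X) := by
  classical
  rw [entH_eq_sum, ← sum_support hP fun ω h => by rw [h, zero_mul]]
  simp only [partitionEntropy, blockMass_supportKer hP]

theorem supportKer_le_of_condH_eq_zero {S T : Type*} (hP : ∀ ω, 0 ≤ P ω) {X : Ω → S} {Y : Ω → T}
    (h : condH P X Y = 0) : supportKer P Y ≤ supportKer P X := by
  rw [condH, entH_eq_partitionEntropy hP, entH_eq_partitionEntropy hP, supportKer_prodMk,
    sub_eq_zero] at h
  by_contra hYX
  exact (partitionEntropy_strictAnti (fun ω => ω.2) (inf_lt_right.2 hYX)).ne' h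

end SupportKer

namespace IsEntropy

variable {L ι : Type*} [SemilatticeInf L] [OrderTop L] {H : L → ℝ}

theorem map_inf_finset_inf_sub_le (hH : IsEntropy H) (J : Finset ι) (f : ι → L) (c : L) :
    H (c ⊓ J.inf f) - H c ≤ ∑ j ∈ J, (H (c ⊓ f j) - H c) := by
  classical
  induction J using Finset.induction_on with
  | empty => simp
  | insert j J hj ih =>
    have hsub : H (c ⊓ (f j ⊓ J.inf f)) + H c ≤ H (c ⊓ f j) + H (c ⊓ J.inf f) :=
      inf_inf_distrib_left c _ _ ▸ hH.submodular inf_le_left inf_le_left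
    rw [inf_insert, sum_insert hj]
    linarith

theorem map_finset_inf_le_sum (hH : IsEntropy H) (J : Finset ι) (f : ι → L) :
    H (J.inf f) ≤ ∑ j ∈ J, H (f j) := by
  simpa [hH.map_top] using hH.map_inf_finset_inf_sub_le J f ⊤

theorem map_finset_inf_le_card_mul (hH : IsEntropy H) {J : Finset ι} {f : ι → L} {x : ℝ}
    (hf : ∀ j ∈ J, H (f j) ≤ x) : H (J.inf f) ≤ J.card * x :=
  (hH.map_finset_inf_le_sum J f).trans (nsmul_eq_mul J.card x ▸ sum_le_card_nsmul J _ x hf)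

theorem map_inf_le (hH : IsEntropy H) (a b : L) : H (a ⊓ b) ≤ H a + H b := by
  simpa [hH.map_top] using hH.submodular (le_top : a ≤ ⊤) (le_top : b ≤ ⊤)

end IsEntropy

section Bfun

variable {k d p q : ℕ}

theorem Bfun_self (k d : ℕ) (α β : ℝ) : Bfun k d k α β = k * α := by
  simp [Bfun]

theorem Bfun_succ (hp : p < k) (hkd : k ≤ d) (α β : ℝ) :
    Bfun k d (p + 1) α β = Bfun k d p α β + α - ((d : ℝ) - p) * β := by
  obtain ⟨e, rfl⟩ := Nat.exists_eq_add_of_lt hp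
  obtain ⟨g, rfl⟩ := Nat.exists_eq_add_of_le hkd
  have hsub : p + e + 1 - p = e + 1 := by omega
  have hsub_succ : p + e + 1 - (p + 1) = e := by omega
  have hextra : p + e + 1 + g + 1 - (p + e + 1) = g + 1 := by omega
  rw [Bfun, Bfun, hsub, hsub_succ, hextra]
  rcases e with _ | e <;> simp only [Nat.add_sub_cancel, zero_mul] <;> push_cast <;> ring

theorem Bfun_eq_add_sum_Ico (hq : q ≤ k) (hkd : k ≤ d) (α β : ℝ) :
    Bfun k d q α β = q * α + (∑ j ∈ Ico q k, (d - j) : ℕ) * β := by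
  induction hq using Nat.decreasingInduction with
  | self => simp [Bfun_self]
  | of_succ q hq ih =>
    have hsucc := Bfun_succ hq hkd α β
    rw [ih] at hsucc
    rw [sum_eq_sum_Ico_succ_bot hq]
    push_cast [Nat.cast_sub (hq.le.trans hkd)] at hsucc ⊢
    linarith

/-- The index region `Δ` of the helper messages in the minimal configuration with intact nodes
`j < q` and repaired nodes `q ≤ j < k`; the pair `(i, j)` stands for the message from `i` to `j`. -/
def helperRegion (n k d q : ℕ) : Finset (Fin n × Fin n) :=
  univ.filter fun e => q ≤ (e.2 : ℕ) ∧ (e.2 : ℕ) < k ∧ (e.2 : ℕ) < (e.1 : ℕ) ∧ (e.1 : ℕ) < d + 1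

theorem mem_helperRegion {n : ℕ} {e : Fin n × Fin n} : e ∈ helperRegion n k d q ↔
    q ≤ (e.2 : ℕ) ∧ (e.2 : ℕ) < k ∧ (e.2 : ℕ) < (e.1 : ℕ) ∧ (e.1 : ℕ) < d + 1 := by
  simp [helperRegion]

theorem card_helperRegion {n : ℕ} (hkd : k ≤ d) (hdn : d + 1 ≤ n) :
    (helperRegion n k d q).card = ∑ j ∈ Ico q k, (d - j) := by
  simp_rw [← Nat.card_Ioc, ← card_sigma]
  refine card_bij (fun e _ => ⟨e.2, e.1⟩) ?_ ?_ ?_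
  · intro e he
    rw [mem_helperRegion] at he
    simp only [mem_sigma, mem_Ico, mem_Ioc]
    omega
  · rintro ⟨i, j⟩ _ ⟨i', j'⟩ _ h
    simpa [Fin.ext_iff, and_comm] using h
  · rintro ⟨j, i⟩ h
    simp only [mem_sigma, mem_Ico, mem_Ioc] at h
    exact ⟨(⟨i, by omega⟩, ⟨j, by omega⟩), mem_helperRegion.2 (by simp only; omega), rfl⟩

end Bfun

/-- An exact-repair regenerating code for an abstract entropy: node `j` stores `w j`, and `s i j`
is the helper message from `i` to `j`. The file itself does not appear; all that decodability says
about it is that any `k` nodes carry entropy at least `B`. -/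
structure IsLatticeRegenCode {L : Type*} [SemilatticeInf L] [OrderTop L] (H : L → ℝ)
    {n : ℕ} (k d : ℕ) (B α β : ℝ) (w : Fin n → L) (s : Fin n → Fin n → L) : Prop
    extends IsEntropy H where
  le_degree : k ≤ d
  degree_lt : d + 1 ≤ n
  map_node_le : ∀ j, H (w j) ≤ α
  map_helper_le : ∀ i j, i ≠ j → H (s i j) ≤ β
  le_map_nodes : ∀ J : Finset (Fin n), k ≤ J.card → B ≤ H (J.inf w)
  node_le_helper : ∀ i j, i ≠ j → w i ≤ s i j
  helpers_le_node : ∀ (j : Fin n) (I : Finset (Fin n)), d ≤ I.card → j ∉ I →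
    (I.inf fun i => s i j) ≤ w j

theorem IsRegenCode.isLatticeRegenCode {Ω : Type*} [Fintype Ω] {n k d : ℕ} {B α β : ℝ}
    {P : Ω → ℝ} {σM : Type*} {σW : Fin n → Type*} {σS : Fin n → Fin n → Type*}
    {M : Ω → σM} {W : ∀ j, Ω → σW j} {S : ∀ i j, Ω → σS i j}
    (hcode : IsRegenCode n k d B α β P M W S) :
    IsLatticeRegenCode (partitionEntropy fun ω : {ω // 0 < P ω} => P ω) k d B α β
      (fun j => supportKer P (W j)) (fun i j => supportKer P (S i j)) where
  toIsEntropy := isEntropy_partitionEntropy (fun ω => ω.2)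
    ((sum_support hcode.prob_nonneg fun _ h => h).trans hcode.prob_sum)
  le_degree := hcode.hkd
  degree_lt := hcode.hdn
  map_node_le j := (entH_eq_partitionEntropy hcode.prob_nonneg (W j)).symm.trans (hcode.hWα j) |>.le
  map_helper_le i j hij :=
    (entH_eq_partitionEntropy hcode.prob_nonneg (S i j)).symm.trans (hcode.hSβ i j hij) |>.le
  le_map_nodes J hJ := by
    rw [← hcode.hMB, entH_eq_partitionEntropy hcode.prob_nonneg]
    exact (partitionEntropy_strictAnti fun ω => ω.2).antitone <| (inf_supportKer_le J W).trans <|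
      supportKer_le_of_condH_eq_zero hcode.prob_nonneg (hcode.hMW J hJ)
  node_le_helper i j hij := supportKer_le_of_condH_eq_zero hcode.prob_nonneg (hcode.hSW i j hij)
  helpers_le_node j I hI hj := (inf_supportKer_le I fun i => S i j).trans <|
    supportKer_le_of_condH_eq_zero hcode.prob_nonneg (hcode.hWS j I hI hj)

namespace IsLatticeRegenCode

variable {L : Type*} [SemilatticeInf L] [OrderTop L] {H : L → ℝ} {n k d : ℕ} {B α β : ℝ}
  {w : Fin n → L} {s : Fin n → Fin n → L}

theorem map_nodes_le (h : IsLatticeRegenCode H k d B α β w s) (J : Finset (Fin n)) :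
    H (J.inf w) ≤ J.card * α :=
  h.map_finset_inf_le_card_mul fun j _ => h.map_node_le j

theorem map_nodes_inf_helpers_le (h : IsLatticeRegenCode H k d B α β w s)
    {I : Finset (Fin n)} {j : Fin n} (hj : j ∉ I) (J : Finset (Fin n)) :
    H (J.inf w ⊓ I.inf fun i => s i j) ≤ H (J.inf w) + (I \ J).card * β := by
  have hne : ∀ i ∈ I, i ≠ j := fun i hi => ne_of_mem_of_not_mem hi hj
  have hfree : (J.inf w ⊓ (I \ J).inf fun i => s i j) ≤ J.inf w ⊓ I.inf fun i => s i j := by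
    refine le_inf inf_le_left (Finset.le_inf fun i hi => ?_)
    by_cases hiJ : i ∈ J
    · exact inf_le_left.trans ((Finset.inf_le hiJ).trans (h.node_le_helper i j (hne i hi)))
    · exact inf_le_right.trans (Finset.inf_le (mem_sdiff.2 ⟨hi, hiJ⟩))
  calc H (J.inf w ⊓ I.inf fun i => s i j)
      ≤ H (J.inf w ⊓ (I \ J).inf fun i => s i j) := h.antitone hfree
    _ ≤ H (J.inf w) + H ((I \ J).inf fun i => s i j) := h.map_inf_le _ _
    _ ≤ H (J.inf w) + (I \ J).card * β := by
        gcongr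
        exact h.map_finset_inf_le_card_mul fun i hi =>
          h.map_helper_le i j (hne i (mem_sdiff.1 hi).1)

theorem map_nodes_inf_helpers_le_of_subset (h : IsLatticeRegenCode H k d B α β w s)
    {I J : Finset (Fin n)} {j : Fin n} (hJI : J ⊆ I) (hI : I.card = d) (hj : j ∉ I) :
    H (J.inf w ⊓ I.inf fun i => s i j) ≤ H (J.inf w) + ((d : ℝ) - J.card) * β := by
  simpa only [cast_card_sdiff hJI, hI] using h.map_nodes_inf_helpers_le hj J

theorem map_insert_node_le (h : IsLatticeRegenCode H k d B α β w s) {J : Finset (Fin n)}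
    (hJ : J.card < k) {j : Fin n} (hj : j ∉ J) :
    H ((insert j J).inf w) ≤ H (J.inf w) + ((d : ℝ) - J.card) * β := by
  have hkd := h.le_degree
  have hdn := h.degree_lt
  obtain ⟨I, hJI, hIj, hI⟩ := exists_subsuperset_card_eq (n := d)
    (subset_erase.2 ⟨subset_univ J, hj⟩) (by omega)
    (by rw [card_erase_of_mem (mem_univ j), card_fin]; omega)
  have hjI : j ∉ I := fun hjI => notMem_erase j _ (hIj hjI)
  refine (h.antitone ?_).trans (h.map_nodes_inf_helpers_le_of_subset hJI hI hjI)
  rw [inf_insert]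
  exact le_inf (inf_le_right.trans (h.helpers_le_node j I hI.ge hjI)) inf_le_left

theorem le_map_nodes_add (h : IsLatticeRegenCode H k d B α β w s) (J : Finset (Fin n))
    (hJ : J.card ≤ k) : B ≤ H (J.inf w) + (Bfun k d J.card α β - J.card * α) := by
  have hkd := h.le_degree
  have hdn := h.degree_lt
  induction hm : k - J.card generalizing J with
  | zero =>
    have hcard : J.card = k := by omega
    simpa [hcard, Bfun_self] using h.le_map_nodes J hcard.ge
  | succ m ih =>
    obtain ⟨j, -, hj⟩ := exists_mem_notMem_of_card_lt_card (s := J) (t := univ)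
      (by rw [card_fin]; omega)
    have hcard := card_insert_of_notMem hj
    have hrest := ih (insert j J) (by omega) (by omega)
    have hrepair := h.map_insert_node_le (by omega) hj
    rw [hcard, Bfun_succ (by omega) hkd] at hrest
    push_cast at hrest
    linarith

theorem map_nodes_inf_helper_le (h : IsLatticeRegenCode H k d B α β w s) {R : Finset (Fin n)}
    {p : ℕ} (hR : R.card = p + 1) (hpd : p < d) {i j : Fin n} (hi : i ∉ R) (hj : j ∈ R) :
    H (R.inf w ⊓ s i j) ≤ p * α + ((d : ℝ) - p) * β := by
  have hdn := h.degree_lt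
  have hij : i ≠ j := (ne_of_mem_of_not_mem hj hi).symm
  have hcard : (R.erase j).card = p := by rw [card_erase_of_mem hj, hR, Nat.add_sub_cancel]
  obtain ⟨I, hRI, hIj, hI⟩ := exists_subsuperset_card_eq (n := d)
    (insert_subset (mem_erase.2 ⟨hij, mem_univ i⟩) (erase_subset_erase j (subset_univ R)))
    ((card_insert_le _ _).trans (by omega))
    (by rw [card_erase_of_mem (mem_univ j), card_fin]; omega)
  obtain ⟨hiI, hRI⟩ := insert_subset_iff.1 hRI
  have hjI : j ∉ I := fun hjI => notMem_erase j _ (hIj hjI)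
  have hdet : ((R.erase j).inf w ⊓ I.inf fun i => s i j) ≤ R.inf w ⊓ s i j := by
    rw [← insert_erase hj, inf_insert, erase_insert (notMem_erase j R)]
    exact le_inf (le_inf (inf_le_right.trans (h.helpers_le_node j I hI.ge hjI)) inf_le_left)
      (inf_le_right.trans (Finset.inf_le hiI))
  calc H (R.inf w ⊓ s i j)
      ≤ H ((R.erase j).inf w ⊓ I.inf fun i => s i j) := h.antitone hdet
    _ ≤ H ((R.erase j).inf w) + ((d : ℝ) - (R.erase j).card) * β :=
        h.map_nodes_inf_helpers_le_of_subset hRI hI hjI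
    _ ≤ p * α + ((d : ℝ) - p) * β := by
        rw [hcard]
        gcongr
        simpa only [hcard] using h.map_nodes_le (R.erase j)

theorem map_nodes_inf_helpers_from_le (h : IsLatticeRegenCode H k d B α β w s)
    {R K : Finset (Fin n)} {p : ℕ} (hR : R.card = p + 1) (hpd : p < d) {i : Fin n} (hi : i ∉ R)
    (hKR : K ⊆ R) :
    H (R.inf w ⊓ K.inf (s i)) + ((K.card : ℝ) - 1) * H (R.inf w)
      ≤ K.card * (p * α + ((d : ℝ) - p) * β) := by
  have hsub := h.map_inf_finset_inf_sub_le K (s i) (R.inf w)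
  have hsum := sum_le_card_nsmul K _ _ fun j hj => h.map_nodes_inf_helper_le hR hpd hi (hKR hj)
  rw [nsmul_eq_mul] at hsum
  rw [sum_sub_distrib, sum_const, nsmul_eq_mul] at hsub
  linarith

theorem map_helpers_from_add_le (h : IsLatticeRegenCode H k d B α β w s) {R K : Finset (Fin n)}
    (hRk : R.card < k) {i : Fin n} (hi : i ∉ R) (hKR : K ⊆ R) :
    H (K.inf (s i)) + B
      ≤ H (R.inf w ⊓ K.inf (s i)) + α + (Bfun k d (R.card + 1) α β - (R.card + 1) * α) := by
  have hwi : w i ≤ K.inf (s i) := Finset.le_inf fun j hj =>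
    h.node_le_helper i j (ne_of_mem_of_not_mem (hKR hj) hi).symm
  have hsub := h.submodular (inf_le_right : R.inf w ⊓ K.inf (s i) ≤ _) hwi
  have hjoint : H ((insert i R).inf w) ≤ H (R.inf w ⊓ K.inf (s i) ⊓ w i) := by
    rw [inf_insert]
    exact h.antitone (le_inf inf_le_right (inf_le_left.trans inf_le_left))
  have hcard := card_insert_of_notMem hi
  have hfile := h.le_map_nodes_add (insert i R) (by omega)
  rw [hcard] at hfile
  push_cast at hfile
  linarith [h.map_node_le i]

theorem map_helpers_from_add_card_mul_le (h : IsLatticeRegenCode H k d B α β w s)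
    {K : Finset (Fin n)} {i : Fin n} {p : ℕ} (hi : i ∉ K) (hK : K.Nonempty)
    (hKp : K.card ≤ p + 1) (hpk : p + 2 ≤ k) :
    H (K.inf (s i)) + K.card * B
      ≤ β + Bfun k d (p + 1) α β + ((K.card : ℝ) - 1) * Bfun k d p α β := by
  have hkd := h.le_degree
  have hdn := h.degree_lt
  obtain ⟨R, hKR, hRi, hR⟩ := exists_subsuperset_card_eq
    (subset_erase.2 ⟨subset_univ K, hi⟩) hKp
    (by rw [card_erase_of_mem (mem_univ i), card_fin]; omega)
  have hiR : i ∉ R := fun hiR => notMem_erase i _ (hRi hiR)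
  have hupper := h.map_nodes_inf_helpers_from_le hR (by omega) hiR hKR
  have hlower := h.map_helpers_from_add_le (by omega) hiR hKR
  have hfile := h.le_map_nodes_add R (by omega)
  have hcard : (0 : ℝ) ≤ (K.card : ℝ) - 1 := sub_nonneg.2 (by exact_mod_cast hK.card_pos)
  have hmul := mul_le_mul_of_nonneg_left hfile hcard
  have hB₁ := Bfun_succ (show p < k by omega) hkd α β
  have hB₂ := Bfun_succ (show p + 1 < k by omega) hkd α β
  rw [hR] at hlower hmul
  push_cast at hlower hmul hB₂
  linear_combination hupper + hlower + hmul + ((K.card : ℝ) - 1) * hB₁ + hB₂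

theorem map_helpers_rectangle_add_le (h : IsLatticeRegenCode H k d B α β w s)
    {I K : Finset (Fin n)} {r : ℕ} (hdisj : Disjoint I K) (hI : I.Nonempty) (hK : K.Nonempty)
    (hKr : K.card ≤ r) (hrk : r + I.card ≤ k) :
    H ((I ×ˢ K).inf fun e => s e.1 e.2) + K.card * B
      ≤ (I ×ˢ K).card * β + (Bfun k d (r + I.card - 1) α β
        + ((K.card - 1 : ℕ) : ℝ) * (Bfun k d (r + I.card - 2) α β - β)) := by
  obtain ⟨i, hi⟩ := hI
  have hIpos : 1 ≤ I.card := card_pos.2 ⟨i, hi⟩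
  have hKpos := hK.card_pos
  have hrow : ∀ l ∈ I.erase i, H (K.inf (s l)) ≤ K.card * β := fun l hl =>
    h.map_finset_inf_le_card_mul fun j hj => h.map_helper_le l j <|
      (ne_of_mem_of_not_mem hj (disjoint_left.1 hdisj (mem_of_mem_erase hl))).symm
  have hrows := sum_le_card_nsmul _ _ _ hrow
  rw [nsmul_eq_mul, card_erase_of_mem hi, Nat.cast_pred hIpos] at hrows
  have hsum : H ((I ×ˢ K).inf fun e => s e.1 e.2)
      ≤ H (K.inf (s i)) + ∑ l ∈ I.erase i, H (K.inf (s l)) := by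
    rw [inf_product_left, add_sum_erase I (fun l => H (K.inf (s l))) hi]
    exact h.map_finset_inf_le_sum I _
  have hfirst := h.map_helpers_from_add_card_mul_le (p := r + I.card - 2)
    (disjoint_left.1 hdisj hi) hK (by omega) (by omega)
  rw [show r + I.card - 2 + 1 = r + I.card - 1 by omega] at hfirst
  rw [card_product, Nat.cast_mul, Nat.cast_pred hKpos]
  linarith

theorem le_node_of_minimal_configuration (h : IsLatticeRegenCode H k d B α β w s) {q : ℕ} {a : L}
    (hw : ∀ j : Fin n, (j : ℕ) < q → a ≤ w j)
    (hs : ∀ e ∈ helperRegion n k d q, a ≤ s e.1 e.2) (j : Fin n) (hj : (j : ℕ) < k) :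
    a ≤ w j := by
  have hkd := h.le_degree
  have hdn := h.degree_lt
  induction j using WellFoundedLT.induction with
  | ind j ih =>
    rcases lt_or_ge (j : ℕ) q with hjq | hqj
    · exact hw j hjq
    let I : Finset (Fin n) := (univ.filter fun i : Fin n => (i : ℕ) < d + 1).erase j
    have hmem (i : Fin n) : i ∈ I ↔ i ≠ j ∧ (i : ℕ) < d + 1 := by
      simp only [I, mem_erase, mem_filter_univ]
    have hI : I.card = d := by
      rw [card_erase_of_mem ((mem_filter_univ j).2 (by omega)), Fin.card_filter_val_lt,
        min_eq_right hdn, Nat.add_sub_cancel]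
    refine (Finset.le_inf fun i hi => ?_).trans (h.helpers_le_node j I hI.ge (notMem_erase j _))
    obtain ⟨hij, hid⟩ := (hmem i).1 hi
    rcases hij.lt_or_gt with hlt | hgt
    · exact (ih i hlt (lt_trans hlt hj)).trans (h.node_le_helper i j hij)
    · exact hs (i, j) (mem_helperRegion.2 ⟨hqj, hj, hgt, hid⟩)

theorem le_add_map_helperRegion (h : IsLatticeRegenCode H k d B α β w s) {q : ℕ} (hq : q ≤ k) :
    B ≤ q * α + H ((helperRegion n k d q).inf fun e => s e.1 e.2) := by
  have hkd := h.le_degree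
  have hdn := h.degree_lt
  let nodes (m : ℕ) : Finset (Fin n) := univ.filter fun j => (j : ℕ) < m
  have hcard {m : ℕ} (hm : m ≤ k) : (nodes m).card = m := by
    rw [Fin.card_filter_val_lt]
    omega
  have hdet : ((nodes q).inf w ⊓ (helperRegion n k d q).inf fun e => s e.1 e.2)
      ≤ (nodes k).inf w := Finset.le_inf fun j hj =>
    h.le_node_of_minimal_configuration
      (fun j hj => inf_le_left.trans (Finset.inf_le (by simpa [nodes] using hj)))
      (fun e he => inf_le_right.trans (Finset.inf_le he)) j (by simpa [nodes] using hj)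
  calc B ≤ H ((nodes k).inf w) := h.le_map_nodes _ (hcard le_rfl).ge
    _ ≤ _ := h.antitone hdet
    _ ≤ _ := h.map_inf_le _ _
    _ ≤ q * α + H ((helperRegion n k d q).inf fun e => s e.1 e.2) := by
        gcongr
        simpa only [hcard hq] using h.map_nodes_le (nodes q)

end IsLatticeRegenCode

theorem stmt_8_general {L ι : Type*} [SemilatticeInf L] [OrderTop L] {H : L → ℝ} {n k d : ℕ}
    {B α β : ℝ} {w : Fin n → L} {s : Fin n → Fin n → L}
    (hcode : IsLatticeRegenCode H k d B α β w s) {q : ℕ} (hq : q ≤ k) {T : Finset ι}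
    {Ms Ls : ι → Finset (Fin n)} {r : ι → ℕ}
    (hdisj : (T : Set ι).PairwiseDisjoint fun t => Ms t ×ˢ Ls t)
    (hcover : T.biUnion (fun t => Ms t ×ˢ Ls t) = helperRegion n k d q)
    (hLs : ∀ t ∈ T, (Ls t).Nonempty) (hMs : ∀ t ∈ T, (Ms t).Nonempty)
    (hr : ∀ t ∈ T, (Ls t).card ≤ r t ∧ r t + (Ms t).card ≤ k) :
    (1 + ∑ t ∈ T, ((Ls t).card : ℝ)) * B
      ≤ Bfun k d q α β
        + ∑ t ∈ T, (Bfun k d (r t + (Ms t).card - 1) α β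
            + (((Ls t).card - 1 : ℕ) : ℝ) * (Bfun k d (r t + (Ms t).card - 2) α β - β)) := by
  have hoff : ∀ t ∈ T, Disjoint (Ms t) (Ls t) := fun t ht => disjoint_left.2 fun i hi hi' => by
    have hmem : (i, i) ∈ helperRegion n k d q :=
      hcover ▸ mem_biUnion.2 ⟨t, ht, mk_mem_product hi hi'⟩
    exact lt_irrefl _ (mem_helperRegion.1 hmem).2.2.1
  have hrects := sum_le_sum fun t ht => hcode.map_helpers_rectangle_add_le
    (hoff t ht) (hMs t ht) (hLs t ht) (hr t ht).1 (hr t ht).2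
  have hfile := hcode.le_add_map_helperRegion hq
  rw [← hcover, inf_biUnion] at hfile
  have hunion := hcode.map_finset_inf_le_sum T fun t => (Ms t ×ˢ Ls t).inf fun e => s e.1 e.2
  have harea : ∑ t ∈ T, ((Ms t ×ˢ Ls t).card : ℝ) = (∑ j ∈ Ico q k, (d - j) : ℕ) := by
    rw [← card_helperRegion hcode.le_degree hcode.degree_lt, ← hcover, card_biUnion hdisj,
      Nat.cast_sum]
  rw [sum_add_distrib, sum_add_distrib, ← sum_mul, ← sum_mul, harea] at hrects
  rw [Bfun_eq_add_sum_Ico hq hcode.le_degree]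
  linarith

/-- second outer bound, Theorem `thm-lm`: for a disjoint cover of the
helper region `Δ = {(i,j) : q+1 ≤ j ≤ k, j < i ≤ d+1}` (server `t` of the paper is
index `t-1`) by rectangles `M_t × L_t`, with `ℓ_t = |L_t| ≥ 1`, `m_t = |M_t| ≥ 1`,
`ℓ_t ≤ r_t`, `r_t + m_t ≤ k`:
`(1 + Σ ℓ_t)·B ≤ B_q + Σ_t (B_{r_t+m_t-1} + (ℓ_t-1)(B_{r_t+m_t-2} - β))`. -/
theorem stmt_8 {Ω : Type*} [Fintype Ω] {n k d : ℕ} {B α β : ℝ} {P : Ω → ℝ}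
    {σM : Type*} {σW : Fin n → Type*} {σS : Fin n → Fin n → Type*}
    {M : Ω → σM} {W : ∀ j, Ω → σW j} {S : ∀ i j, Ω → σS i j}
    (hcode : IsRegenCode n k d B α β P M W S)
    (q : ℕ) (hq : q ≤ k)
    (s : ℕ) (Ms Ls : Fin s → Finset (Fin n)) (r : Fin s → ℕ)
    (hLs : ∀ t, Ls t ⊆ Finset.univ.filter (fun j : Fin n => q ≤ (j : ℕ) ∧ (j : ℕ) < k))
    (hMs : ∀ t, Ms t ⊆ Finset.univ.filter (fun i : Fin n => (i : ℕ) < d + 1))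
    (hsub : ∀ t, Ms t ×ˢ Ls t ⊆
      Finset.univ.filter (fun e : Fin n × Fin n =>
        q ≤ (e.2 : ℕ) ∧ (e.2 : ℕ) < k ∧ (e.2 : ℕ) < (e.1 : ℕ) ∧ (e.1 : ℕ) < d + 1))
    (hdisj : ∀ t t', t ≠ t' → Disjoint (Ms t ×ˢ Ls t) (Ms t' ×ˢ Ls t'))
    (hcover : Finset.univ.biUnion (fun t => Ms t ×ˢ Ls t) =
      Finset.univ.filter (fun e : Fin n × Fin n =>
        q ≤ (e.2 : ℕ) ∧ (e.2 : ℕ) < k ∧ (e.2 : ℕ) < (e.1 : ℕ) ∧ (e.1 : ℕ) < d + 1))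
    (hℓ : ∀ t, 1 ≤ (Ls t).card) (hm : ∀ t, 1 ≤ (Ms t).card)
    (hr : ∀ t, (Ls t).card ≤ r t ∧ r t + (Ms t).card ≤ k) :
    (1 + ∑ t, ((Ls t).card : ℝ)) * B
      ≤ Bfun k d q α β
        + ∑ t, (Bfun k d (r t + (Ms t).card - 1) α β
            + (((Ls t).card - 1 : ℕ) : ℝ) * (Bfun k d (r t + (Ms t).card - 2) α β - β)) := by
  exact stmt_8_general hcode.isLatticeRegenCode hq (fun t _ t' _ => hdisj t t') hcover
    (fun t _ => card_pos.1 (hℓ t)) (fun t _ => card_pos.1 (hm t)) fun t _ => hr t
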